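/- Let A be a reduced commutative ring, B an A-algebra of finite type, and M a finitely generated B-module. If f = 0 is the only element f of A such that (1) B[f⁻¹] and M[f⁻¹] are free as A[f⁻¹]-modules, (2) B[f⁻¹] is of finite presentation as an A[f⁻¹]-algebra, and (3) M[f⁻¹] is finitely presented as a B[f⁻¹]-module, then 1 = 0 in A. -/

import Mathlib

/-!
Let `K` be the module of relations of a finite free module `⨁ A[x] e i` with quotient `E`, and
order the terms `x ^ α • e i`. For `f : A`, consider the positions of the leading terms of the
elements of `K` whose leading coefficient is a power of `f`. This set is closed under
multiplication by monomials, and it can only grow when `f` is replaced by a multiple. By Dickson's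
lemma there are no infinite strictly increasing chains of such sets, so every nonzero element of
`A` has a nonzero multiple `f` for which the set no longer grows.

After inverting such an `f`, division with remainder shows that the terms outside the leading set
span `E`. They are independent, since a relation `p` among them with `f • p ≠ 0` would put its
leading position into the leading set of a nonzero multiple of `f`. Dickson's lemma also provides
finitely many relations whose leading terms divide all leading terms, and these generate all
relations once `f` is inverted. The theorem follows by choosing one `f` for both `B` and `M`, viewed
as modules over a polynomial ring surjecting onto `B`.
-/

namespace GenericFreeness

section WellQuasiOrder

variable {α : Type*} {r : α → α → Prop}

theorem exists_finset_forall_exists_rel (hr : WellQuasiOrdered r) (S : Set α) :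
    ∃ t : Finset α, ↑t ⊆ S ∧ ∀ b ∈ S, ∃ a ∈ t, r a b := by
  by_contra! hcon
  obtain ⟨u, -, hu⟩ := exists_seq_of_forall_finset_exists (· ∈ S) (fun a b => ¬ r a b) hcon
  obtain ⟨m, n, hmn, hr⟩ := hr u
  exact hu m n hmn hr

theorem exists_maximal_of_forall_rel_mem (hr : WellQuasiOrdered r) {𝒮 : Set (Set α)}
    (hne : 𝒮.Nonempty) (hclosed : ∀ S ∈ 𝒮, ∀ a ∈ S, ∀ b, r a b → b ∈ S) :
    ∃ S, Maximal (· ∈ 𝒮) S := by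
  refine Set.WellFoundedOn.exists_maximal (Set.wellFoundedOn_iff_no_descending_seq.mpr ?_) hne
  intro u hu
  have hmono : StrictMono u := fun m n hmn => u.map_rel_iff.mpr hmn
  choose a ha ha' using fun n => Set.exists_of_ssubset (hmono (Nat.lt_succ_self n))
  obtain ⟨m, n, hmn, hrel⟩ := hr a
  exact ha' n (hclosed _ (hu n) _ (hmono.monotone hmn (ha m)) _ hrel)

end WellQuasiOrder

section LeadingSet

open Finsupp Set

variable {A σ Γ : Type*} [CommRing A] [LinearOrder σ] {N N₀ : Submodule A (σ →₀ A)} {f g : A}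
  {μ : σ} {p q : σ →₀ A}

/-- The positions of the leading terms of those elements of `N` whose leading coefficient is a
power of `f`. If `f` is nilpotent, every position qualifies. -/
def leadingSet (N : Submodule A (σ →₀ A)) (f : A) : Set σ :=
  {μ | ∃ k : ℕ, ∃ p ∈ N, p ∈ supported A A (Iic μ) ∧ p μ = f ^ k}

/-- `f` is stable for `N` if passing to a nonzero multiple of `f` does not enlarge the
leading set. -/
def IsStable (N : Submodule A (σ →₀ A)) (f : A) : Prop :=
  ∀ g, f ∣ g → g ≠ 0 → leadingSet N g ⊆ leadingSet N f

theorem leadingSet_mono (N : Submodule A (σ →₀ A)) (h : f ∣ g) :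
    leadingSet N f ⊆ leadingSet N g := by
  obtain ⟨c, rfl⟩ := h
  rintro μ ⟨k, p, hpN, hp, hk⟩
  exact ⟨k, c ^ k • p, N.smul_mem _ hpN, Submodule.smul_mem _ _ hp, by simp [hk, mul_pow, mul_comm]⟩

theorem IsStable.of_dvd (hf : IsStable N f) (h : f ∣ g) : IsStable N g := fun _ hg hne =>
  (hf _ (h.trans hg) hne).trans (leadingSet_mono N h)

theorem shift_mem_leadingSet {s : σ → σ} (hs : StrictMono s) (hN : ∀ p ∈ N, p.mapDomain s ∈ N)
    (hμ : μ ∈ leadingSet N f) : s μ ∈ leadingSet N f := by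
  obtain ⟨k, p, hpN, hp, hk⟩ := hμ
  refine ⟨k, p.mapDomain s, hN p hpN, ?_, by rwa [mapDomain_apply hs.injective]⟩
  have hmem : p.mapDomain s ∈ supported A A (s '' Iic μ) := by
    rw [← lmapDomain_supported]
    exact Submodule.mem_map_of_mem hp
  exact supported_mono (hs.monotone.mapsTo_Iic.image_subset) hmem

theorem exists_isStable {s : Γ → σ → σ} (hs : ∀ γ, StrictMono (s γ))
    (hwqo : WellQuasiOrdered fun μ ν => ∃ γ, ν = s γ μ)
    (hN : ∀ γ, ∀ p ∈ N, p.mapDomain (s γ) ∈ N) (hf : f ≠ 0) :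
    ∃ g, f ∣ g ∧ g ≠ 0 ∧ IsStable N g := by
  obtain ⟨_, ⟨g, ⟨hfg, hg⟩, rfl⟩, hmax⟩ := exists_maximal_of_forall_rel_mem
    (𝒮 := leadingSet N '' {g | f ∣ g ∧ g ≠ 0}) hwqo ⟨_, f, ⟨dvd_rfl, hf⟩, rfl⟩ (by
      rintro _ ⟨g, -, rfl⟩ μ hμ _ ⟨γ, rfl⟩
      exact shift_mem_leadingSet (hs γ) (hN γ) hμ)
  exact ⟨g, hfg, hg, fun g' hdvd hne =>
    hmax ⟨g', ⟨hfg.trans hdvd, hne⟩, rfl⟩ (leadingSet_mono N hdvd)⟩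

theorem exists_mem_supported_Iic_apply_ne_zero (hp : p ≠ 0) :
    ∃ μ, p ∈ supported A A (Iic μ) ∧ p μ ≠ 0 := by
  have hne : p.support.Nonempty := support_nonempty_iff.mpr hp
  exact ⟨p.support.max' hne, p.support.le_max',
    mem_support_iff.mp (p.support.max'_mem hne)⟩

theorem smul_eq_zero_of_isStable (hf : IsStable N f) (hpN : p ∈ N)
    (hp : p ∈ supported A A (leadingSet N f)ᶜ) : f • p = 0 := by
  by_contra hne
  obtain ⟨μ, hle, hμ⟩ := exists_mem_supported_Iic_apply_ne_zero hne
  -- The leading coefficient `f * p μ` of `f • p` is a nonzero multiple of `f`.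
  have hmem : μ ∈ leadingSet N f :=
    hf (f * p μ) (dvd_mul_right f _) hμ ⟨1, f • p, N.smul_mem f hpN, hle, by simp⟩
  have hpμ : p μ = 0 := (mem_supported' A p).mp hp μ (not_not_intro hmem)
  simp [hpμ] at hμ

theorem mem_supported_Iio_of_apply_eq_zero (hp : p ∈ supported A A (Iic μ)) (hμ : p μ = 0) :
    p ∈ supported A A (Iio μ) := fun _ hν =>
  (hp hν).lt_of_ne fun h => mem_support_iff.mp hν (h ▸ hμ)

theorem cancel_leading_mem_supported_Iio (hp : p ∈ supported A A (Iic μ))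
    (hq : q ∈ supported A A (Iic μ)) : q μ • p - p μ • q ∈ supported A A (Iio μ) :=
  mem_supported_Iio_of_apply_eq_zero
    (Submodule.sub_mem _ (Submodule.smul_mem _ _ hp) (Submodule.smul_mem _ _ hq))
    (by simp [mul_comm])

theorem induction_on_supported_Iic [WellFoundedLT σ] {P : (σ →₀ A) → Prop} (zero : P 0)
    (step : ∀ μ, (∀ q ∈ supported A A (Iio μ), P q) → ∀ p ∈ supported A A (Iic μ), P p)
    (p : σ →₀ A) : P p := by
  have main (μ : σ) : ∀ p ∈ supported A A (Iic μ), P p := by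
    induction μ using WellFoundedLT.induction with
    | _ μ ih =>
      refine step μ fun q hq => ?_
      obtain rfl | hne := eq_or_ne q 0
      · exact zero
      · obtain ⟨ν, hle, hν⟩ := exists_mem_supported_Iic_apply_ne_zero hne
        exact ih ν (hq (mem_support_iff.mpr hν)) q hle
  obtain rfl | hne := eq_or_ne p 0
  · exact zero
  · obtain ⟨μ, hle, -⟩ := exists_mem_supported_Iic_apply_ne_zero hne
    exact main μ p hle

theorem exists_pow_smul_sub_mem [WellFoundedLT σ] (N : Submodule A (σ →₀ A)) (f : A) (p : σ →₀ A) :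
    ∃ k : ℕ, ∃ r ∈ supported A A (leadingSet N f)ᶜ, f ^ k • p - r ∈ N := by
  induction p using induction_on_supported_Iic with
  | zero => exact ⟨0, 0, Submodule.zero_mem _, by simp⟩
  | step μ ih p hp =>
    by_cases hμ : μ ∈ leadingSet N f
    · obtain ⟨j, g, hgN, hg, hj⟩ := hμ
      obtain ⟨k, r, hr, hmem⟩ := ih _ (cancel_leading_mem_supported_Iio hp hg)
      refine ⟨k + j, r, hr, ?_⟩
      convert N.add_mem hmem (N.smul_mem (f ^ k * p μ) hgN) using 1
      rw [hj, pow_add]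
      module
    · have hsingle : single μ (p μ) ∈ supported A A (leadingSet N f)ᶜ :=
        single_mem_supported A _ hμ
      have hle : single μ (p μ) ∈ supported A A (Iic μ) := single_mem_supported A _ self_mem_Iic
      obtain ⟨k, r, hr, hmem⟩ := ih (p - single μ (p μ))
        (mem_supported_Iio_of_apply_eq_zero (Submodule.sub_mem _ hp hle) (by simp))
      refine ⟨k, r + f ^ k • single μ (p μ), add_mem hr (Submodule.smul_mem _ _ hsingle), ?_⟩
      convert hmem using 1
      module

theorem exists_pow_smul_mem_of_leadingSet_subset [WellFoundedLT σ] (hf : IsStable N f)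
    (hle : N₀ ≤ N) (hL : leadingSet N f ⊆ leadingSet N₀ f) (hp : p ∈ N) :
    ∃ k : ℕ, f ^ k • p ∈ N₀ := by
  obtain ⟨k, r, hr, hmem⟩ := exists_pow_smul_sub_mem N₀ f p
  have hrN : r ∈ N := (N.sub_mem_iff_right (N.smul_mem _ hp)).mp (hle hmem)
  have hfr : f • r = 0 :=
    smul_eq_zero_of_isStable hf hrN (supported_mono (compl_subset_compl.mpr hL) hr)
  refine ⟨k + 1, ?_⟩
  simpa [pow_succ', mul_smul, smul_sub, hfr] using N₀.smul_mem f hmem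

theorem exists_finite_subset_forall_exists_pow_smul_mem [WellFoundedLT σ] {s : Γ → σ → σ}
    (hs : ∀ γ, StrictMono (s γ)) (hwqo : WellQuasiOrdered fun μ ν => ∃ γ, ν = s γ μ)
    (hf : IsStable N f) :
    ∃ G : Set (σ →₀ A), G.Finite ∧ G ⊆ N ∧ ∀ N₀ ≤ N, G ⊆ N₀ →
      (∀ γ, ∀ p ∈ N₀, p.mapDomain (s γ) ∈ N₀) → ∀ p ∈ N, ∃ k : ℕ, f ^ k • p ∈ N₀ := by
  obtain ⟨S, hSL, hS⟩ := exists_finset_forall_exists_rel hwqo (leadingSet N f)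
  choose k g hgN hg hk using fun ν : S => hSL ν.2
  refine ⟨range g, finite_range g, range_subset_iff.mpr hgN, fun N₀ hle hG hN₀ p hp => ?_⟩
  refine exists_pow_smul_mem_of_leadingSet_subset hf hle (fun μ hμ => ?_) hp
  obtain ⟨ν, hνS, γ, rfl⟩ := hS μ hμ
  have hν : ν ∈ leadingSet N₀ f :=
    ⟨k ⟨ν, hνS⟩, g ⟨ν, hνS⟩, hG (mem_range_self _), hg _, hk _⟩
  exact shift_mem_leadingSet (hs γ) (hN₀ γ) hν

end LeadingSet

section Localization

variable {R F M M' : Type*} [CommRing R] [AddCommGroup F] [Module R F]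
  [AddCommGroup M] [Module R M] [AddCommGroup M'] [Module R M']

theorem isLocalizedModule_comp (S : Submonoid R) (g : F →ₗ[R] M) (l : M →ₗ[R] M')
    [IsLocalizedModule S l] (hker : ∀ x, g x = 0 → ∃ s ∈ S, s • x = 0)
    (hrange : ∀ y, ∃ s ∈ S, s • y ∈ LinearMap.range g) : IsLocalizedModule S (l ∘ₗ g) where
  map_units := IsLocalizedModule.map_units l
  surj z := by
    obtain ⟨⟨y, t⟩, hy⟩ := IsLocalizedModule.surj S l z
    obtain ⟨s, hs, x, hx⟩ := hrange y
    refine ⟨⟨x, ⟨s, hs⟩ * t⟩, ?_⟩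
    rw [mul_smul, hy, LinearMap.comp_apply, hx, map_smul, Submonoid.mk_smul]
  exists_of_eq {x y} hxy := by
    obtain ⟨t, ht⟩ := IsLocalizedModule.exists_of_eq (S := S) (f := l) hxy
    have hgt : g (t • x - t • y) = 0 := by
      rw [map_sub, g.map_smul_of_tower, g.map_smul_of_tower, ht, sub_self]
    obtain ⟨s, hs, hst⟩ := hker _ hgt
    refine ⟨⟨s, hs⟩ * t, ?_⟩
    rwa [smul_sub, sub_eq_zero, ← Submonoid.mk_smul s hs, ← Submonoid.mk_smul s hs, smul_smul,
      smul_smul] at hst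

variable {R' : Type*} [CommRing R'] [Algebra R R'] [Module R' M'] [IsScalarTower R R' M'] {f : R}
  [IsLocalization.Away f R']

theorem free_of_isStable {σ : Type*} [LinearOrder σ] [WellFoundedLT σ]
    {Φ : (σ →₀ R) →ₗ[R] M} (hΦ : Function.Surjective Φ) (hf : IsStable (LinearMap.ker Φ) f)
    (l : M →ₗ[R] M') [IsLocalizedModule (Submonoid.powers f) l] : Module.Free R' M' := by
  let C := Finsupp.supported R R (leadingSet (LinearMap.ker Φ) f)ᶜ
  have : Module.Free R C :=
    Module.Free.of_equiv (Finsupp.supportedEquivFinsupp (M := R) (R := R) _).symm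
  have : IsLocalizedModule (Submonoid.powers f) (l ∘ₗ Φ.domRestrict C) := by
    refine isLocalizedModule_comp (F := C) (.powers f) (Φ.domRestrict C) l (fun x hx => ?_)
      fun y => ?_
    · exact ⟨f, Submonoid.mem_powers f, Subtype.ext (smul_eq_zero_of_isStable hf hx x.2)⟩
    · obtain ⟨p, rfl⟩ := hΦ y
      obtain ⟨k, r, hr, hmem⟩ := exists_pow_smul_sub_mem (LinearMap.ker Φ) f p
      rw [LinearMap.mem_ker, map_sub, map_smul, sub_eq_zero] at hmem
      exact ⟨f ^ k, ⟨k, rfl⟩, ⟨r, hr⟩, hmem.symm⟩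
  exact Module.free_of_isLocalizedModule (M := C) (Submonoid.powers f) (l ∘ₗ Φ.domRestrict C)

theorem finitePresentation_of_torsion_ker [Module.FinitePresentation R F] {g : F →ₗ[R] M}
    (hg : Function.Surjective g) {K : Submodule R F} (hK : K.FG) (hle : K ≤ LinearMap.ker g)
    (htors : ∀ x ∈ LinearMap.ker g, ∃ k : ℕ, f ^ k • x ∈ K) (l : M →ₗ[R] M')
    [IsLocalizedModule (Submonoid.powers f) l] : Module.FinitePresentation R' M' := by
  have : Module.FinitePresentation R (F ⧸ K) :=
    Module.finitePresentation_of_surjective K.mkQ K.mkQ_surjective (by rwa [K.ker_mkQ])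
  have : IsLocalizedModule (Submonoid.powers f) (l ∘ₗ K.liftQ g hle) := by
    refine isLocalizedModule_comp (.powers f) (K.liftQ g hle) l (fun x hx => ?_) fun y => ?_
    · obtain ⟨x, rfl⟩ := K.mkQ_surjective x
      obtain ⟨k, hk⟩ := htors x hx
      exact ⟨f ^ k, ⟨k, rfl⟩, (Submodule.Quotient.mk_eq_zero K).mpr hk⟩
    · obtain ⟨x, rfl⟩ := hg y
      exact ⟨1, one_mem _, K.mkQ x, by simp⟩
  exact FinitePresentation.of_isBaseChange _
    (IsLocalizedModule.isBaseChange (Submonoid.powers f) R' (l ∘ₗ K.liftQ g hle))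

end Localization

section Monomials

open MvPolynomial

/-- Indexes the terms `x ^ α • e i` of a free module over a polynomial ring by `(α, i)`, ordered
lexicographically. -/
abbrev TermIndex (σ ι : Type*) : Type _ := Lex (σ →₀ ℕ) ×ₗ ι

/-- Multiplication of a term by the monomial `x ^ γ`. -/
noncomputable def shift {σ ι : Type*} (γ : σ →₀ ℕ) (s : TermIndex σ ι) : TermIndex σ ι :=
  toLex (toLex (γ + ofLex (ofLex s).1), (ofLex s).2)

variable {σ ι : Type*}

theorem strictMono_shift [LinearOrder σ] [LinearOrder ι] (γ : σ →₀ ℕ) :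
    StrictMono (shift γ : TermIndex σ ι → TermIndex σ ι) := fun s t hst => by
  rw [Prod.Lex.lt_iff] at hst ⊢
  exact hst.imp (add_lt_add_right (α := Lex (σ →₀ ℕ)) · (toLex γ))
    (And.imp_left (congrArg (toLex γ + ·)))

theorem wellQuasiOrdered_shift [Finite σ] [Finite ι] :
    WellQuasiOrdered fun s t : TermIndex σ ι => ∃ γ, t = shift γ s := by
  intro u
  obtain ⟨i, j, hij, hle, heq⟩ :=
    (wellQuasiOrdered_le (α := σ →₀ ℕ)).prod (Finite.wellQuasiOrdered (Eq : ι → ι → Prop))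
      fun k => (ofLex (ofLex (u k)).1, (ofLex (u k)).2)
  exact ⟨i, j, hij, _, Prod.ext (tsub_add_cancel_of_le hle).symm heq.symm⟩

variable (A σ ι : Type*) [CommRing A] [Finite ι]

/-- The terms `x ^ α • e i` as an `A`-basis of the free module over `A[x]` with basis `e`. -/
noncomputable def termBasis : Module.Basis (TermIndex σ ι) A (ι → MvPolynomial σ A) :=
  ((basisMonomials σ A).smulTower (Pi.basisFun (MvPolynomial σ A) ι)).reindex
    ((toLex.prodCongr (Equiv.refl ι)).trans toLex)

variable {A σ ι}

theorem monomial_smul_termBasis (γ : σ →₀ ℕ) (s : TermIndex σ ι) :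
    (monomial γ 1 : MvPolynomial σ A) • termBasis A σ ι s = termBasis A σ ι (shift γ s) := by
  simp [termBasis, shift, smul_smul, Module.Basis.smulTower_apply]

theorem termBasis_repr_monomial_smul (γ : σ →₀ ℕ) (v : ι → MvPolynomial σ A) :
    (termBasis A σ ι).repr ((monomial γ 1 : MvPolynomial σ A) • v) =
      ((termBasis A σ ι).repr v).mapDomain (shift γ) := by
  have h : (termBasis A σ ι).repr.toLinearMap ∘ₗ
      DistribSMul.toLinearMap A _ (monomial γ 1 : MvPolynomial σ A) =
      Finsupp.lmapDomain A A (shift γ) ∘ₗ (termBasis A σ ι).repr.toLinearMap :=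
    (termBasis A σ ι).ext fun s => by simp [monomial_smul_termBasis]
  exact LinearMap.congr_fun h v

/-- The coordinates of the elements of `K` with respect to the basis of terms. -/
noncomputable def termCoords (K : Submodule (MvPolynomial σ A) (ι → MvPolynomial σ A)) :
    Submodule A (TermIndex σ ι →₀ A) :=
  (K.restrictScalars A).comap (termBasis A σ ι).repr.symm.toLinearMap

theorem repr_mem_termCoords {K : Submodule (MvPolynomial σ A) (ι → MvPolynomial σ A)}
    {v : ι → MvPolynomial σ A} : (termBasis A σ ι).repr v ∈ termCoords K ↔ v ∈ K := by
  simp [termCoords]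

theorem mapDomain_shift_mem_termCoords (K : Submodule (MvPolynomial σ A) (ι → MvPolynomial σ A))
    (γ : σ →₀ ℕ) (p : TermIndex σ ι →₀ A) (hp : p ∈ termCoords K) :
    p.mapDomain (shift γ) ∈ termCoords K := by
  obtain ⟨v, rfl⟩ := (termBasis A σ ι).repr.surjective p
  rw [← termBasis_repr_monomial_smul, repr_mem_termCoords]
  exact K.smul_mem _ (repr_mem_termCoords.mp hp)

variable [LinearOrder σ] [Finite σ] [LinearOrder ι]

theorem exists_fg_le_of_isStable {K : Submodule (MvPolynomial σ A) (ι → MvPolynomial σ A)} {f : A}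
    (hf : IsStable (termCoords K) f) :
    ∃ K₀ ≤ K, K₀.FG ∧ ∀ v ∈ K, ∃ k : ℕ, f ^ k • v ∈ K₀ := by
  obtain ⟨G, hGfin, hGK, hG⟩ :=
    exists_finite_subset_forall_exists_pow_smul_mem strictMono_shift wellQuasiOrdered_shift hf
  let K₀ := Submodule.span (MvPolynomial σ A) ((termBasis A σ ι).repr.symm '' G)
  have hle : K₀ ≤ K := Submodule.span_le.mpr (Set.image_subset_iff.mpr hGK)
  refine ⟨K₀, hle, Submodule.fg_span (hGfin.image _), fun v hv => ?_⟩
  obtain ⟨k, hk⟩ := hG (termCoords K₀) (fun p hp => hle hp)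
    (fun p hp => Submodule.subset_span (Set.mem_image_of_mem _ hp))
    (mapDomain_shift_mem_termCoords K₀) _ (repr_mem_termCoords.mpr hv)
  exact ⟨k, by rwa [← map_smul, repr_mem_termCoords] at hk⟩

end Monomials

section StablePresentation

variable {A : Type*} [CommRing A]

/-- An `A[x]`-module `E` is stably presented at `f` if it is the quotient of a finite free
`A[x]`-module by a submodule for whose leading terms `f` is stable. The variables `σ` are ordered
because the terms are compared lexicographically. -/
def IsStablyPresented (σ E : Type*) [LinearOrder σ] [AddCommGroup E] [Module (MvPolynomial σ A) E]
    (f : A) : Prop :=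
  ∃ (m : ℕ) (g : (Fin m → MvPolynomial σ A) →ₗ[MvPolynomial σ A] E),
    Function.Surjective g ∧ IsStable (termCoords (LinearMap.ker g)) f

variable {σ E E' : Type*} [LinearOrder σ] [AddCommGroup E] [Module (MvPolynomial σ A) E]
  [AddCommGroup E'] {f f' : A}

theorem IsStablyPresented.of_dvd (h : IsStablyPresented σ E f) (hdvd : f ∣ f') :
    IsStablyPresented σ E f' :=
  let ⟨m, g, hg, hf⟩ := h
  ⟨m, g, hg, hf.of_dvd hdvd⟩

variable [Finite σ]

theorem exists_isStablyPresented [Module.Finite (MvPolynomial σ A) E] (hf : f ≠ 0) :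
    ∃ f', f ∣ f' ∧ f' ≠ 0 ∧ IsStablyPresented σ E f' := by
  obtain ⟨m, g, hg⟩ := Module.Finite.exists_fin' (MvPolynomial σ A) E
  obtain ⟨f', hdvd, hf', hstable⟩ := exists_isStable strictMono_shift wellQuasiOrdered_shift
    (mapDomain_shift_mem_termCoords (LinearMap.ker g)) hf
  exact ⟨f', hdvd, hf', m, g, hg, hstable⟩

theorem IsStablyPresented.free [Module A E] [IsScalarTower A (MvPolynomial σ A) E] [Module A E']
    (h : IsStablyPresented σ E f) (l : E →ₗ[A] E') [IsLocalizedModule (Submonoid.powers f) l]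
    {A' : Type*} [CommRing A'] [Algebra A A'] [IsLocalization.Away f A'] [Module A' E']
    [IsScalarTower A A' E'] : Module.Free A' E' := by
  obtain ⟨m, g, hg, hf⟩ := h
  exact free_of_isStable
    (Φ := g.restrictScalars A ∘ₗ (termBasis A σ (Fin m)).repr.symm.toLinearMap)
    (hg.comp (termBasis A σ (Fin m)).repr.symm.surjective) hf l

theorem IsStablyPresented.finitePresentation [Module (MvPolynomial σ A) E']
    (h : IsStablyPresented σ E f) (l : E →ₗ[MvPolynomial σ A] E')
    [IsLocalizedModule (Submonoid.powers (algebraMap A (MvPolynomial σ A) f)) l]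
    {R' : Type*} [CommRing R'] [Algebra (MvPolynomial σ A) R']
    [IsLocalization.Away (algebraMap A (MvPolynomial σ A) f) R'] [Module R' E']
    [IsScalarTower (MvPolynomial σ A) R' E'] : Module.FinitePresentation R' E' := by
  obtain ⟨m, g, hg, hf⟩ := h
  obtain ⟨K, hle, hK, htors⟩ := exists_fg_le_of_isStable hf
  refine finitePresentation_of_torsion_ker hg hK hle (fun v hv => ?_) l
    (f := algebraMap A (MvPolynomial σ A) f)
  obtain ⟨k, hk⟩ := htors v hv
  exact ⟨k, by rwa [← map_pow, algebraMap_smul]⟩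

end StablePresentation

section Away

theorem finitePresentation_of_surjective_algebraMap {R S M : Type*} [CommRing R] [CommRing S]
    [Algebra R S] [AddCommGroup M] [Module R M] [Module S M] [IsScalarTower R S M]
    (h : Function.Surjective (algebraMap R S)) [Module.FinitePresentation R M] :
    Module.FinitePresentation S M :=
  have := Algebra.isEpi_of_surjective_algebraMap R S h
  FinitePresentation.of_isBaseChange (R := R) LinearMap.id
    ⟨Algebra.injective_lift_lsmul R S M, fun y => ⟨1 ⊗ₜ y, by simp⟩⟩

theorem algebraMap_away_surjective {R B R' B' : Type*} [CommRing R] [CommRing B] [CommRing R']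
    [CommRing B'] [Algebra R B] [Algebra R R'] [Algebra B B'] [Algebra R B'] [Algebra R' B']
    [IsScalarTower R B B'] [IsScalarTower R R' B'] (r : R) [IsLocalization.Away r R']
    [IsLocalization.Away (algebraMap R B r) B'] (h : Function.Surjective (algebraMap R B)) :
    Function.Surjective (algebraMap R' B') := by
  have : IsLocalization (Algebra.algebraMapSubmonoid B (Submonoid.powers r)) B' := by
    rwa [Algebra.algebraMapSubmonoid_powers]
  rw [IsLocalization.algebraMap_eq_map_map_submonoid (Submonoid.powers r) B]
  exact IsLocalization.map_surjective_of_surjective _ _ _ h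

variable {A σ B B' M M' : Type*} [CommRing A] [LinearOrder σ] [Finite σ] [CommRing B] [Algebra A B]
  [Algebra (MvPolynomial σ A) B] [IsScalarTower A (MvPolynomial σ A) B] [CommRing B'] [Algebra B B']
  [Algebra A B'] [IsScalarTower A B B'] [AddCommGroup M] [Module B M] [Module (MvPolynomial σ A) M]
  [IsScalarTower (MvPolynomial σ A) B M] [AddCommGroup M'] [Module B M'] [Module B' M']
  [IsScalarTower B B' M']

theorem finitePresentation_away_of_isStablyPresented
    (hsurj : Function.Surjective (algebraMap (MvPolynomial σ A) B)) {f : A}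
    [hB' : IsLocalization.Away (algebraMap A B f) B'] (l : M →ₗ[B] M')
    [hl : IsLocalizedModule (Submonoid.powers (algebraMap A B f)) l]
    (hB : IsStablyPresented σ B f) (hM : IsStablyPresented σ M f) :
    Algebra.FinitePresentation A B' ∧ Module.FinitePresentation B' M' := by
  let R := MvPolynomial σ A
  let r := algebraMap A R f
  let R' := Localization.Away r
  rw [IsScalarTower.algebraMap_apply A R B] at hB' hl
  let : Algebra R B' := Algebra.compHom B' (algebraMap R B)
  have : IsScalarTower R B B' := .of_algebraMap_eq fun _ => rfl
  let φ : R' →+* B' := IsLocalization.Away.map R' B' (algebraMap R B) r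
  have hφ (x : R) : φ (algebraMap R R' x) = algebraMap R B' x := IsLocalization.map_eq _ x
  let : Algebra R' B' := φ.toAlgebra
  have : IsScalarTower R R' B' := .of_algebraMap_eq fun x => (hφ x).symm
  let : Module R M' := Module.compHom M' (algebraMap R B)
  let : Module R' M' := Module.compHom M' (algebraMap R' B')
  have : IsScalarTower R B M' := .of_algebraMap_smul fun _ _ => rfl
  have : IsScalarTower R' B' M' := .of_algebraMap_smul fun _ _ => rfl
  have : IsScalarTower R B' M' := .to₁₃₄ R B B' M'
  have : IsScalarTower R R' M' := .to₁₂₄ R R' B' M'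
  have : IsScalarTower A R B' := .to₁₂₄ A R B B'
  have : IsScalarTower A R' B' := .to₁₃₄ A R R' B'
  have : IsLocalizedModule (Submonoid.powers r) (l.restrictScalars R) := .restrictScalars_powers r l
  have : IsLocalizedModule (Submonoid.powers r) ((Algebra.linearMap B B').restrictScalars R) :=
    .restrictScalars_powers r _
  have : Module.FinitePresentation R' B' :=
    hB.finitePresentation ((Algebra.linearMap B B').restrictScalars R)
  have : Module.FinitePresentation R' M' := hM.finitePresentation (l.restrictScalars R)
  have : Algebra.FinitePresentation R R' := IsLocalization.Away.finitePresentation r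
  have : Algebra.FinitePresentation A R' := .trans A R R'
  have hsurj' : Function.Surjective (algebraMap R' B') := algebraMap_away_surjective r hsurj
  exact ⟨.trans A R' B', finitePresentation_of_surjective_algebraMap hsurj'⟩

variable {A' : Type*} [CommRing A'] [Algebra A A'] [Algebra A' B'] [IsScalarTower A A' B']
  [Module A' M'] [IsScalarTower A' B' M']

theorem free_and_finitePresentation_away_of_isStablyPresented
    (hsurj : Function.Surjective (algebraMap (MvPolynomial σ A) B)) {f : A}
    [IsLocalization.Away f A'] [IsLocalization.Away (algebraMap A B f) B'] (l : M →ₗ[B] M')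
    [IsLocalizedModule (Submonoid.powers (algebraMap A B f)) l]
    (hB : IsStablyPresented σ B f) (hM : IsStablyPresented σ M f) :
    Module.Free A' B' ∧ Module.Free A' M' ∧
      Algebra.FinitePresentation A' B' ∧ Module.FinitePresentation B' M' := by
  let : Module A M := Module.compHom M (algebraMap A B)
  let : Module A M' := Module.compHom M' (algebraMap A B)
  have : IsScalarTower A B M := .of_algebraMap_smul fun _ _ => rfl
  have : IsScalarTower A B M' := .of_algebraMap_smul fun _ _ => rfl
  have : IsScalarTower A (MvPolynomial σ A) M := .to₁₂₄ A (MvPolynomial σ A) B M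
  have : IsScalarTower A B' M' := .to₁₃₄ A B B' M'
  have : IsScalarTower A A' M' := .to₁₂₄ A A' B' M'
  have : IsLocalizedModule (Submonoid.powers f) (l.restrictScalars A) := .restrictScalars_powers f l
  have : IsLocalizedModule (Submonoid.powers f) ((Algebra.linearMap B B').restrictScalars A) :=
    .restrictScalars_powers f _
  obtain ⟨hBfp, hMfp⟩ := finitePresentation_away_of_isStablyPresented (B' := B') hsurj l hB hM
  have : Algebra.FiniteType A A' := IsLocalization.finiteType_of_monoid_fg (Submonoid.powers f) A'
  exact ⟨hB.free ((Algebra.linearMap B B').restrictScalars A), hM.free (l.restrictScalars A),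
    .of_restrict_scalars_finitePresentation A A' B', hMfp⟩

end Away

end GenericFreeness

theorem generic_freeness_general (A : Type*) [CommRing A]
    (B : Type*) [CommRing B] [Algebra A B] [Algebra.FiniteType A B]
    (M : Type*) [AddCommGroup M] [Module B M] [Module.Finite B M] {a : A} (ha : a ≠ 0) :
    ∃ f, a ∣ f ∧ f ≠ 0 ∧
      letI φ : Localization.Away f →+* Localization.Away (algebraMap A B f) :=
        IsLocalization.Away.map (Localization.Away f)
          (Localization.Away (algebraMap A B f)) (algebraMap A B) f
      letI : Algebra (Localization.Away f) (Localization.Away (algebraMap A B f)) :=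
        φ.toAlgebra
      letI : Module (Localization.Away f)
          (LocalizedModule (Submonoid.powers (algebraMap A B f)) M) :=
        Module.compHom _ φ
      Module.Free (Localization.Away f) (Localization.Away (algebraMap A B f)) ∧
      Module.Free (Localization.Away f)
        (LocalizedModule (Submonoid.powers (algebraMap A B f)) M) ∧
      Algebra.FinitePresentation (Localization.Away f)
        (Localization.Away (algebraMap A B f)) ∧
      Module.FinitePresentation (Localization.Away (algebraMap A B f))
        (LocalizedModule (Submonoid.powers (algebraMap A B f)) M) := by
  obtain ⟨n, π, hπ⟩ := Algebra.FiniteType.iff_quotient_mvPolynomial''.mp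
    (inferInstance : Algebra.FiniteType A B)
  let R := MvPolynomial (Fin n) A
  let : Algebra R B := π.toRingHom.toAlgebra
  have : IsScalarTower A R B := .of_algebraMap_eq fun x => (π.commutes x).symm
  let : Module R M := Module.compHom M (algebraMap R B)
  have : IsScalarTower R B M := .of_algebraMap_smul fun _ _ => rfl
  have : Module.Finite R B := .of_surjective (Algebra.linearMap R B) hπ
  have : Module.Finite R M := .trans B M
  obtain ⟨f₁, hf₁, hne₁, hB⟩ :=
    GenericFreeness.exists_isStablyPresented (σ := Fin n) (E := B) ha
  obtain ⟨f, hf, hne, hM⟩ :=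
    GenericFreeness.exists_isStablyPresented (σ := Fin n) (E := M) hne₁
  refine ⟨f, hf₁.trans hf, hne, ?_⟩
  let φ : Localization.Away f →+* Localization.Away (algebraMap A B f) :=
    IsLocalization.Away.map _ _ (algebraMap A B) f
  have hφ (x : A) : φ (algebraMap A _ x) = algebraMap A _ x := IsLocalization.map_eq _ x
  let : Algebra (Localization.Away f) (Localization.Away (algebraMap A B f)) := φ.toAlgebra
  let : Module (Localization.Away f) (LocalizedModule (.powers (algebraMap A B f)) M) :=
    Module.compHom _ φ
  have : IsScalarTower A (Localization.Away f) (Localization.Away (algebraMap A B f)) :=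
    .of_algebraMap_eq fun x => (hφ x).symm
  have : IsScalarTower (Localization.Away f) (Localization.Away (algebraMap A B f))
      (LocalizedModule (.powers (algebraMap A B f)) M) := .of_algebraMap_smul fun _ _ => rfl
  exact GenericFreeness.free_and_finitePresentation_away_of_isStablyPresented hπ
    (LocalizedModule.mkLinearMap (.powers (algebraMap A B f)) M) (hB.of_dvd hf) hM

theorem generic_freeness (A : Type*) [CommRing A] [IsReduced A]
    (B : Type*) [CommRing B] [Algebra A B] [Algebra.FiniteType A B]
    (M : Type*) [AddCommGroup M] [Module B M] [Module.Finite B M]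
    (h : ∀ f : A,
      letI φ : Localization.Away f →+* Localization.Away (algebraMap A B f) :=
        IsLocalization.Away.map (Localization.Away f)
          (Localization.Away (algebraMap A B f)) (algebraMap A B) f
      letI : Algebra (Localization.Away f) (Localization.Away (algebraMap A B f)) :=
        φ.toAlgebra
      letI : Module (Localization.Away f)
          (LocalizedModule (Submonoid.powers (algebraMap A B f)) M) :=
        Module.compHom _ φ
      -- (1) B[f⁻¹] and M[f⁻¹] are free A[f⁻¹]-modules
      Module.Free (Localization.Away f) (Localization.Away (algebraMap A B f)) →
      Module.Free (Localization.Away f)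
        (LocalizedModule (Submonoid.powers (algebraMap A B f)) M) →
      -- (2) B[f⁻¹] is of finite presentation as an A[f⁻¹]-algebra
      Algebra.FinitePresentation (Localization.Away f)
        (Localization.Away (algebraMap A B f)) →
      -- (3) M[f⁻¹] is a finitely presented B[f⁻¹]-module
      Module.FinitePresentation (Localization.Away (algebraMap A B f))
        (LocalizedModule (Submonoid.powers (algebraMap A B f)) M) →
      f = 0) :
    (1 : A) = 0 := by
  by_contra hne
  obtain ⟨f, -, hf, hB, hM, hBfp, hMfp⟩ := generic_freeness_general A B M hne
  exact hf (h f hB hM hBfp hMfp)
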